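/- Let K be a field of characteristic 0 and for each m ≥ 0 let δ_m be the derivation of K⟨X,Y⟩ with δ_m(X) = 0 and δ_m(Y) = Xᵐ. If P ∈ K⟨X,Y⟩ satisfies δ_m(P) = 0 for all m ≥ 0, then P lies in the subalgebra of K⟨X,Y⟩ generated by X and T₁ = YX − XY. -/

import Mathlib

/-!
Words with `n` letters `Y` correspond to monomials in commuting variables `x₀, …, xₙ`:
`X ^ a₀ * Y * X ^ a₁ * ⋯ * Y * X ^ aₙ ↦ x₀ ^ a₀ ⋯ xₙ ^ aₙ`. On the component `f` of `Y`-degree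
`n + 1` the derivation `δ_m` becomes `f ↦ ∑ i ≤ n, xᵢ ^ m * f(x₀, …, xᵢ, xᵢ, …, xₙ)`. Since the
differences `xᵢ - xⱼ` are not zero divisors, Lagrange interpolation shows that all `δ_m` vanish only
if each `f(x₀, …, xᵢ, xᵢ, …, xₙ)` does, that is, if `f` is divisible by
`(x₀ - x₁) ⋯ (xₙ - xₙ₊₁)`. The multiples of this product correspond to the linear
combinations of words in `X` and `T₁` with `n + 1` letters `T₁`, because inserting a factor
`xᵢ - xᵢ₊₁` amounts to replacing the corresponding `Y` by `X * Y - Y * X`.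
-/

namespace WordSymbol

open MvPolynomial

section

variable {R : Type*} [CommSemiring R]

theorem freeAlgebra_left_induction {σ : Type*} {p : FreeAlgebra R σ → Prop} (one : p 1)
    (add : ∀ a b, p a → p b → p (a + b)) (smul : ∀ (c : R) a, p a → p (c • a))
    (ι_mul : ∀ i a, p a → p (FreeAlgebra.ι R i * a)) (P : FreeAlgebra R σ) : p P := by
  suffices mul_right : ∀ a, p a → p (P * a) by simpa using mul_right 1 one
  induction P using FreeAlgebra.induction with
  | grade0 r => exact fun a ha ↦ Algebra.smul_def r a ▸ smul r a ha
  | grade1 i => exact ι_mul i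
  | mul u v hu hv => exact fun a ha ↦ mul_assoc u v a ▸ hu _ (hv _ ha)
  | add u v hu hv => exact fun a ha ↦ add_mul u v a ▸ add _ _ (hu _ ha) (hv _ ha)

theorem exists_derivation_freeAlgebra {σ : Type*} (q : σ → FreeAlgebra R σ) :
    ∃ δ : FreeAlgebra R σ →ₗ[R] FreeAlgebra R σ,
      (∀ a b, δ (a * b) = δ a * b + a * δ b) ∧ ∀ i, δ (FreeAlgebra.ι R i) = q i := by
  -- A derivation is the second component of an algebra homomorphism `a ↦ (a, δ a)` into `A ⊕ εA`.
  let graph : FreeAlgebra R σ →ₐ[R] TrivSqZeroExt (FreeAlgebra R σ) (FreeAlgebra R σ) :=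
    FreeAlgebra.lift R fun i ↦ .inl (FreeAlgebra.ι R i) + .inr (q i)
  have fst_graph (a) : (graph a).fst = a := by
    have : (TrivSqZeroExt.fstHom R _ _).comp graph = AlgHom.id R _ :=
      FreeAlgebra.hom_ext (by ext i; simp [graph])
    exact DFunLike.congr_fun this a
  refine ⟨(TrivSqZeroExt.sndHom (FreeAlgebra R σ) _).restrictScalars R ∘ₗ graph.toLinearMap,
    fun a b ↦ ?_, fun i ↦ ?_⟩
  · simp [fst_graph, add_comm]
  · simp [graph]

theorem mvPolynomial_nat_induction {p : MvPolynomial ℕ R → Prop}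
    (rename_succ : ∀ g, p (rename Nat.succ g)) (add : ∀ f g, p f → p g → p (f + g))
    (X_zero_mul : ∀ f, p f → p (X 0 * f)) (f : MvPolynomial ℕ R) : p f := by
  suffices mul_rename : ∀ g : MvPolynomial ℕ R, p (f * rename Nat.succ g) by
    simpa using mul_rename 1
  induction f using MvPolynomial.induction_on with
  | C c =>
    intro g
    rw [← rename_C Nat.succ, ← map_mul]
    exact rename_succ _
  | add f₁ f₂ h₁ h₂ =>
    intro g
    rw [add_mul]
    exact add _ _ (h₁ g) (h₂ g)
  | mul_X f i hf =>
    intro g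
    cases i with
    | zero =>
      rw [mul_right_comm, mul_comm]
      exact X_zero_mul _ (hf g)
    | succ i =>
      rw [mul_assoc, ← Nat.succ_eq_add_one, ← rename_X Nat.succ, ← map_mul]
      exact hf _

end

section

variable {R : Type*} [CommRing R]

theorem eq_zero_of_forall_sum_pow_mul_eq_zero {ι : Type*} {s : Finset ι} {x v : ι → R}
    (hx : ∀ i ∈ s, ∀ j ∈ s, i ≠ j → IsRegular (x i - x j))
    (h : ∀ m : ℕ, ∑ i ∈ s, x i ^ m * v i = 0) {k : ι} (hk : k ∈ s) : v k = 0 := by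
  classical
  have sum_eval (p : Polynomial R) : ∑ i ∈ s, p.eval (x i) * v i = 0 := by
    simp only [Polynomial.eval_eq_sum_range, Finset.sum_mul, mul_assoc]
    rw [Finset.sum_comm]
    simp [← Finset.mul_sum, h]
  -- The Lagrange numerator vanishing at every `x j` with `j ≠ k`.
  have lagrange := sum_eval (∏ j ∈ s.erase k, (Polynomial.X - Polynomial.C (x j)))
  rw [Finset.sum_eq_single_of_mem k hk fun i hi hik ↦ ?_] at lagrange
  · rw [Polynomial.eval_prod] at lagrange
    have regular : IsRegular (∏ j ∈ s.erase k, (x k - x j)) := IsRegular.prod fun j hj ↦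
      hx k hk j (Finset.mem_of_mem_erase hj) (Finset.ne_of_mem_erase hj).symm
    exact regular.left.eq_iff.mp (by simpa using lagrange)
  · rw [Polynomial.eval_prod, Finset.prod_eq_zero (Finset.mem_erase.mpr ⟨hik, hi⟩) (by simp),
      zero_mul]

theorem isRegular_X_sub_X {σ : Type*} {i j : σ} (hij : i ≠ j) :
    IsRegular (X i - X j : MvPolynomial σ R) := by
  classical
  -- The automorphism `x_i ↦ x_i + x_j` carries `x_i - x_j` to the regular element `x_i`.
  let translate (c : R) : MvPolynomial σ R →ₐ[R] MvPolynomial σ R :=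
    aeval (Function.update X i (X i + C c * X j))
  have translate_neg : (translate (-1)).comp (translate 1) = AlgHom.id R _ := by
    ext l : 1
    by_cases hl : l = i <;> simp [translate, hl, hij.symm]
  have translate_sub : translate 1 (X i - X j) = X i := by simp [translate, hij.symm]
  refine (Commute.isRegular_iff (Commute.all _)).mpr
    (isLeftRegular_iff_right_eq_zero_of_mul.mpr fun f hf ↦ ?_)
  have translate_f : translate 1 f = 0 := by
    apply isRegular_X (n := i).left.eq_iff.mp
    rw [← translate_sub, ← map_mul, hf, map_zero, mul_zero]
  simpa [translate_f] using (DFunLike.congr_fun translate_neg f).symm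

theorem X_sub_X_dvd_sub_rename_update {σ : Type*} [DecidableEq σ] (i j : σ)
    (f : MvPolynomial σ R) : X i - X j ∣ f - rename (Function.update id j i) f := by
  let I : Ideal (MvPolynomial σ R) := Ideal.span {X i - X j}
  have rename_mod : (Ideal.Quotient.mkₐ R I).comp (rename (Function.update id j i)) =
      Ideal.Quotient.mkₐ R I := by
    ext l : 1
    by_cases hl : l = j
    · simpa [hl] using Ideal.Quotient.eq.mpr (Ideal.mem_span_singleton_self (X i - X j))
    · simp [hl]
  exact Ideal.mem_span_singleton.mp (Ideal.Quotient.eq.mp (DFunLike.congr_fun rename_mod f).symm)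

end

section

variable {R : Type*} [CommSemiring R]

/-- The substitution `f ↦ f(x₀, …, x_k, x_k, x_{k+1}, …)`, which identifies the variables `x_k` and
`x_{k+1}` and renumbers the later ones. -/
noncomputable def merge (k : ℕ) : MvPolynomial ℕ R →ₐ[R] MvPolynomial ℕ R :=
  rename fun j ↦ if j ≤ k then j else j - 1

theorem merge_X_of_le {j k : ℕ} (h : j ≤ k) : merge k (X j : MvPolynomial ℕ R) = X j := by
  simp [merge, h]

theorem merge_zero_rename_succ (f : MvPolynomial ℕ R) : merge 0 (rename Nat.succ f) = f := by
  rw [merge, rename_rename]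
  exact rename_id_apply f

theorem merge_succ_rename_succ (k : ℕ) (f : MvPolynomial ℕ R) :
    merge (k + 1) (rename Nat.succ f) = rename Nat.succ (merge k f) := by
  simp only [merge, rename_rename]
  congr 2
  funext j
  simp only [Function.comp_apply]
  split_ifs <;> omega

/-- The action of `R⟨X, Y⟩` on `R[x₀, x₁, …][T]`, with `X` (generator `0`) multiplying by `x₀` and
`Y` (generator `1`) shifting the variables `xᵢ ↦ xᵢ₊₁` and multiplying by `T`. -/
noncomputable def symbolAction :
    FreeAlgebra R (Fin 2) →ₐ[R] Module.End R (Polynomial (MvPolynomial ℕ R)) :=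
  FreeAlgebra.lift R ![Algebra.lsmul R R _ (X 0 : MvPolynomial ℕ R),
    LinearMap.mulLeft R Polynomial.X ∘ₗ
      (Polynomial.mapAlgHom (rename Nat.succ)).toLinearMap]

/-- The commutative symbol of a noncommutative polynomial: the linear map sending the word
`X ^ a₀ * Y * X ^ a₁ * ⋯ * Y * X ^ aₙ` to `x₀ ^ a₀ ⋯ xₙ ^ aₙ * T ^ n`. -/
noncomputable def symbol : FreeAlgebra R (Fin 2) →ₗ[R] Polynomial (MvPolynomial ℕ R) :=
  LinearMap.applyₗ 1 ∘ₗ symbolAction.toLinearMap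

@[simp]
theorem symbol_one : symbol (1 : FreeAlgebra R (Fin 2)) = 1 := by
  simp [symbol]

@[simp]
theorem symbol_X_mul (P : FreeAlgebra R (Fin 2)) :
    symbol (FreeAlgebra.ι R 0 * P) = (X 0 : MvPolynomial ℕ R) • symbol P := by
  simp [symbol, symbolAction]

@[simp]
theorem symbol_X_pow_mul (m : ℕ) (P : FreeAlgebra R (Fin 2)) :
    symbol (FreeAlgebra.ι R 0 ^ m * P) = (X 0 ^ m : MvPolynomial ℕ R) • symbol P := by
  induction m with
  | zero => simp
  | succ m ih => simp [pow_succ', mul_assoc, ih, mul_smul]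

@[simp]
theorem symbol_Y_mul (P : FreeAlgebra R (Fin 2)) :
    symbol (FreeAlgebra.ι R 1 * P) =
      Polynomial.X * (symbol P).map (rename Nat.succ : _ →ₐ[R] MvPolynomial ℕ R).toRingHom := by
  simp [symbol, symbolAction]

/-- The word `X ^ a₀ * Y * X ^ a₁ * ⋯ * Y * X ^ aₙ`. -/
noncomputable def word : ℕ → (ℕ → ℕ) → FreeAlgebra R (Fin 2)
  | 0, a => FreeAlgebra.ι R 0 ^ a 0
  | n + 1, a => FreeAlgebra.ι R 0 ^ a 0 * (FreeAlgebra.ι R 1 * word n fun i ↦ a (i + 1))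

/-- The linear map sending `x₀ ^ a₀ * x₁ ^ a₁ ⋯` to the word with `n` letters `Y` and exponents
`a₀, …, aₙ`; the variables beyond `xₙ` are set to `1`. -/
noncomputable def ofMvPolynomial (n : ℕ) : MvPolynomial ℕ R →ₗ[R] FreeAlgebra R (Fin 2) :=
  (basisMonomials ℕ R).constr R fun a ↦ word n a

theorem ofMvPolynomial_monomial (n : ℕ) (a : ℕ →₀ ℕ) :
    ofMvPolynomial n (monomial a (1 : R)) = word n a := by
  simpa [ofMvPolynomial] using (basisMonomials ℕ R).constr_basis R
    (fun a ↦ (word n a : FreeAlgebra R (Fin 2))) a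

theorem ofMvPolynomial_X_zero_mul (n : ℕ) (f : MvPolynomial ℕ R) :
    ofMvPolynomial n (X 0 * f) = FreeAlgebra.ι R 0 * ofMvPolynomial n f := by
  suffices ofMvPolynomial n ∘ₗ LinearMap.mulLeft R (X 0) =
      LinearMap.mulLeft R (FreeAlgebra.ι R 0) ∘ₗ ofMvPolynomial n from DFunLike.congr_fun this f
  refine (basisMonomials ℕ R).ext fun a ↦ ?_
  cases n <;> simp [X, monomial_mul, ofMvPolynomial_monomial, word, pow_add, mul_assoc]

theorem ofMvPolynomial_rename_succ (n : ℕ) (f : MvPolynomial ℕ R) :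
    ofMvPolynomial (n + 1) (rename Nat.succ f) = FreeAlgebra.ι R 1 * ofMvPolynomial n f := by
  suffices ofMvPolynomial (n + 1) ∘ₗ (rename Nat.succ).toLinearMap =
      LinearMap.mulLeft R (FreeAlgebra.ι R 1) ∘ₗ ofMvPolynomial n from DFunLike.congr_fun this f
  refine (basisMonomials ℕ R).ext fun a ↦ ?_
  have mapDomain_zero : a.mapDomain Nat.succ 0 = 0 :=
    Finsupp.mapDomain_of_notMem_range _ _ (by simp)
  have mapDomain_succ (i : ℕ) : a.mapDomain Nat.succ (i + 1) = a i :=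
    Finsupp.mapDomain_apply Nat.succ_injective a i
  simp [rename_monomial, ofMvPolynomial_monomial, word, mapDomain_zero, mapDomain_succ]

/-- The left inverse of `symbol` given by `ofMvPolynomial n` on the coefficient of `T ^ n`. -/
noncomputable def ofSymbol : Polynomial (MvPolynomial ℕ R) →ₗ[R] FreeAlgebra R (Fin 2) :=
  Polynomial.lsum ofMvPolynomial

theorem ofSymbol_monomial (n : ℕ) (f : MvPolynomial ℕ R) :
    ofSymbol (Polynomial.monomial n f) = ofMvPolynomial n f := by
  simp [ofSymbol]

theorem ofSymbol_X_zero_smul (F : Polynomial (MvPolynomial ℕ R)) :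
    ofSymbol ((X 0 : MvPolynomial ℕ R) • F) = FreeAlgebra.ι R 0 * ofSymbol F := by
  induction F using Polynomial.induction_on' with
  | add F G hF hG => simp only [smul_add, mul_add, map_add, hF, hG]
  | monomial n f =>
    rw [Polynomial.smul_monomial, smul_eq_mul, ofSymbol_monomial, ofSymbol_monomial,
      ofMvPolynomial_X_zero_mul]

theorem ofSymbol_X_mul_map_rename_succ (F : Polynomial (MvPolynomial ℕ R)) :
    ofSymbol (Polynomial.X * F.map (rename Nat.succ : _ →ₐ[R] MvPolynomial ℕ R).toRingHom) =
      FreeAlgebra.ι R 1 * ofSymbol F := by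
  induction F using Polynomial.induction_on' with
  | add F G hF hG => simp only [Polynomial.map_add, mul_add, map_add, hF, hG]
  | monomial n f =>
    rw [Polynomial.map_monomial, Polynomial.X_mul_monomial, ofSymbol_monomial, ofSymbol_monomial]
    exact ofMvPolynomial_rename_succ n f

theorem ofSymbol_symbol (P : FreeAlgebra R (Fin 2)) : ofSymbol (symbol P) = P := by
  induction P using freeAlgebra_left_induction with
  | one =>
    rw [symbol_one, ← Polynomial.monomial_zero_one, ofSymbol_monomial]
    simpa [word] using ofMvPolynomial_monomial (R := R) 0 0
  | add a b ha hb => rw [map_add, map_add, ha, hb]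
  | smul c a ha => rw [map_smul, map_smul, ha]
  | ι_mul i a ha =>
    fin_cases i
    · simp [ofSymbol_X_zero_smul, ha]
    · simpa [ha] using ofSymbol_X_mul_map_rename_succ (symbol a)

end

section

variable {R : Type*} [CommRing R]

theorem X_sub_X_dvd_of_merge_eq_zero {k : ℕ} {f : MvPolynomial ℕ R} (h : merge k f = 0) :
    X k - X (k + 1) ∣ f := by
  have unmerge : rename (fun j ↦ if j ≤ k then j else j + 1) (merge k f) =
      rename (Function.update id (k + 1) k) f := by
    rw [merge, rename_rename]
    congr 2
    funext j
    simp only [Function.comp_apply, Function.update_apply, id_eq]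
    split_ifs <;> omega
  simpa [← unmerge, h] using X_sub_X_dvd_sub_rename_update k (k + 1) f

variable (R) in
/-- The product `(x₀ - x₁) * (x₁ - x₂) ⋯ (xₙ₋₁ - xₙ)`, which is up to sign the symbol of `T₁ ^ n`
without its factor `T ^ n`. -/
noncomputable def diffProd (n : ℕ) : MvPolynomial ℕ R :=
  ∏ i ∈ Finset.range n, (X i - X (i + 1))

theorem diffProd_succ (n : ℕ) :
    diffProd R (n + 1) = (X 0 - X 1) * rename Nat.succ (diffProd R n) := by
  simp [diffProd, Finset.prod_range_succ', mul_comm]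

theorem diffProd_dvd_of_merge_eq_zero {n : ℕ} {f : MvPolynomial ℕ R}
    (h : ∀ k < n, merge k f = 0) : diffProd R n ∣ f := by
  induction n with
  | zero => simp [diffProd]
  | succ n ih =>
    obtain ⟨g, rfl⟩ := ih fun k hk ↦ h k (hk.trans n.lt_succ_self)
    have merge_diffProd : merge n (diffProd R n) = diffProd R n := by
      rw [diffProd, map_prod]
      refine Finset.prod_congr rfl fun i hi ↦ ?_
      have hi := Finset.mem_range.mp hi
      rw [map_sub, merge_X_of_le hi.le, merge_X_of_le hi]
    have regular : IsRegular (diffProd R n) :=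
      IsRegular.prod fun i _ ↦ isRegular_X_sub_X i.succ_ne_self.symm
    have merge_g : merge n g = 0 :=
      regular.left.eq_iff.mp (by simpa [merge_diffProd] using h n n.lt_succ_self)
    rw [diffProd, Finset.prod_range_succ]
    exact mul_dvd_mul_left _ (X_sub_X_dvd_of_merge_eq_zero merge_g)

variable (R) in
/-- The subalgebra of `R⟨X, Y⟩` generated by `X` and `T₁ = Y * X - X * Y`. -/
noncomputable def adjoinXT : Subalgebra R (FreeAlgebra R (Fin 2)) :=
  Algebra.adjoin R {FreeAlgebra.ι R 0, FreeAlgebra.ι R 1 * FreeAlgebra.ι R 0 -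
    FreeAlgebra.ι R 0 * FreeAlgebra.ι R 1}

theorem ofMvPolynomial_diffProd_succ_mul_rename_succ (n : ℕ) (g : MvPolynomial ℕ R) :
    ofMvPolynomial (n + 1) (diffProd R (n + 1) * rename Nat.succ g) =
      -((FreeAlgebra.ι R 1 * FreeAlgebra.ι R 0 - FreeAlgebra.ι R 0 * FreeAlgebra.ι R 1) *
        ofMvPolynomial n (diffProd R n * g)) := by
  have expand : diffProd R (n + 1) * rename Nat.succ g =
      X 0 * rename Nat.succ (diffProd R n * g) - rename Nat.succ (X 0 * (diffProd R n * g)) := by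
    simp only [diffProd_succ, map_mul, rename_X]
    ring
  rw [expand, map_sub, ofMvPolynomial_X_zero_mul, ofMvPolynomial_rename_succ,
    ofMvPolynomial_rename_succ, ofMvPolynomial_X_zero_mul]
  noncomm_ring

theorem ofMvPolynomial_diffProd_mul_mem (n : ℕ) (g : MvPolynomial ℕ R) :
    ofMvPolynomial n (diffProd R n * g) ∈ adjoinXT R := by
  have X_mem : FreeAlgebra.ι R 0 ∈ adjoinXT R := Algebra.subset_adjoin (by simp)
  have T_mem : FreeAlgebra.ι R 1 * FreeAlgebra.ι R 0 - FreeAlgebra.ι R 0 * FreeAlgebra.ι R 1 ∈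
      adjoinXT R := Algebra.subset_adjoin (by simp)
  induction n generalizing g with
  | zero =>
    induction g using MvPolynomial.induction_on' with
    | monomial a c =>
      have monomial_eq : monomial a c = c • monomial a (1 : R) := by simp [smul_monomial]
      rw [diffProd, Finset.prod_range_zero, one_mul, monomial_eq, map_smul, ofMvPolynomial_monomial]
      exact (adjoinXT R).smul_mem (pow_mem X_mem _) c
    | add f g hf hg => simpa only [mul_add, map_add] using add_mem hf hg
  | succ n ih =>
    induction g using mvPolynomial_nat_induction with
    | rename_succ g =>
      rw [ofMvPolynomial_diffProd_succ_mul_rename_succ]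
      exact neg_mem (mul_mem T_mem (ih g))
    | add f g hf hg => simpa only [mul_add, map_add] using add_mem hf hg
    | X_zero_mul g hg =>
      rw [mul_left_comm, ofMvPolynomial_X_zero_mul]
      exact mul_mem X_mem hg

theorem coeff_symbol_derivation {m : ℕ} {δ : FreeAlgebra R (Fin 2) →ₗ[R] FreeAlgebra R (Fin 2)}
    (leibniz : ∀ a b, δ (a * b) = δ a * b + a * δ b) (hX : δ (FreeAlgebra.ι R 0) = 0)
    (hY : δ (FreeAlgebra.ι R 1) = FreeAlgebra.ι R 0 ^ m) (P : FreeAlgebra R (Fin 2)) (n : ℕ) :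
    (symbol (δ P)).coeff n =
      ∑ i ∈ Finset.range (n + 1), X i ^ m * merge i ((symbol P).coeff (n + 1)) := by
  induction P using freeAlgebra_left_induction generalizing n with
  | one =>
    have : δ 1 = 0 := by simpa using leibniz 1 1
    simp [this, Polynomial.coeff_one]
  | add a b ha hb => simp [ha, hb, mul_add, Finset.sum_add_distrib]
  | smul c a ha => simp [ha, Finset.smul_sum]
  | ι_mul i a ha =>
    fin_cases i
    · simp [leibniz, hX, ha, Finset.mul_sum, merge_X_of_le, mul_left_comm]
    · rw [Finset.sum_range_succ']
      cases n with
      | zero => simp [leibniz, hY, merge_zero_rename_succ]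
      | succ n =>
        simp [leibniz, hY, ha, merge_zero_rename_succ, merge_succ_rename_succ,
          add_comm (X 0 ^ m * _)]

theorem merge_coeff_symbol_eq_zero {P : FreeAlgebra R (Fin 2)}
    (h : ∀ (m : ℕ) (δ : FreeAlgebra R (Fin 2) →ₗ[R] FreeAlgebra R (Fin 2)),
      (∀ a b, δ (a * b) = δ a * b + a * δ b) →
      δ (FreeAlgebra.ι R 0) = 0 → δ (FreeAlgebra.ι R 1) = FreeAlgebra.ι R 0 ^ m → δ P = 0)
    {k n : ℕ} (hk : k < n) : merge k ((symbol P).coeff n) = 0 := by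
  obtain ⟨n, rfl⟩ := Nat.exists_eq_add_one_of_ne_zero (Nat.ne_zero_of_lt hk)
  refine eq_zero_of_forall_sum_pow_mul_eq_zero (x := X) (s := Finset.range (n + 1))
    (v := fun i ↦ merge i ((symbol P).coeff (n + 1)))
    (fun i _ j _ hij ↦ isRegular_X_sub_X hij) (fun m ↦ ?_) (Finset.mem_range.mpr hk)
  obtain ⟨δ, leibniz, hδ⟩ := exists_derivation_freeAlgebra ![0, FreeAlgebra.ι R 0 ^ m]
  rw [← coeff_symbol_derivation leibniz (hδ 0) (hδ 1), h m δ leibniz (hδ 0) (hδ 1)]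
  simp

end

end WordSymbol

theorem constant_of_all_deltam_in_X_T1_general
    {R : Type*} [CommRing R] {X Y : FreeAlgebra R (Fin 2)}
    (hX : X = FreeAlgebra.ι R 0) (hY : Y = FreeAlgebra.ι R 1) {P : FreeAlgebra R (Fin 2)}
    (h : ∀ (m : ℕ) (δ : FreeAlgebra R (Fin 2) →ₗ[R] FreeAlgebra R (Fin 2)),
      (∀ a b : FreeAlgebra R (Fin 2), δ (a * b) = δ a * b + a * δ b) →
      δ X = 0 → δ Y = X ^ m → δ P = 0) :
    P ∈ Algebra.adjoin R ({X, Y * X - X * Y} : Set (FreeAlgebra R (Fin 2))) := by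
  subst hX hY
  rw [← WordSymbol.ofSymbol_symbol P, WordSymbol.ofSymbol, Polynomial.lsum_apply]
  refine sum_mem fun n _ ↦ ?_
  have diffProd_dvd : WordSymbol.diffProd R n ∣ (WordSymbol.symbol P).coeff n :=
    WordSymbol.diffProd_dvd_of_merge_eq_zero fun _ ↦ WordSymbol.merge_coeff_symbol_eq_zero h
  obtain ⟨g, hg⟩ := diffProd_dvd
  rw [hg]
  exact WordSymbol.ofMvPolynomial_diffProd_mul_mem n g

/-- If `P ∈ K⟨X,Y⟩` is killed by every derivation `δ_m` with `δ_m X = 0`,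
`δ_m Y = Xᵐ`, then `P` lies in the subalgebra generated by `X` and
`T₁ = YX - XY`. -/
theorem constant_of_all_deltam_in_X_T1
    {K : Type*} [Field K] [CharZero K]
    (X Y : FreeAlgebra K (Fin 2))
    (hX : X = FreeAlgebra.ι K 0) (hY : Y = FreeAlgebra.ι K 1)
    (P : FreeAlgebra K (Fin 2))
    (h : ∀ (m : ℕ) (δ : FreeAlgebra K (Fin 2) →ₗ[K] FreeAlgebra K (Fin 2)),
      (∀ a b : FreeAlgebra K (Fin 2), δ (a * b) = δ a * b + a * δ b) →
      δ X = 0 → δ Y = X ^ m → δ P = 0) :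
    P ∈ Algebra.adjoin K ({X, Y * X - X * Y} : Set (FreeAlgebra K (Fin 2))) :=
  constant_of_all_deltam_in_X_T1_general hX hY h
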